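/- Assume x_i b_j ∉ qᶻ for all 1 ≤ i ≤ n, 1 ≤ j ≤ n+1, and (d x_1⁻¹⋯x_n⁻¹) b_j ∉ qᶻ for all 1 ≤ j ≤ n+1. Then the series defining K(x) converges absolutely and K(x) = (1−q)ⁿ (q)_∞ⁿ (q a_1⁻¹⋯a_{n+1}⁻¹ d)_∞ (q b_1⁻¹⋯b_{n+1}⁻¹ d⁻¹)_∞ / (q a_1⁻¹⋯a_{n+1}⁻¹ b_1⁻¹⋯b_{n+1}⁻¹)_∞ · ∏_{i=1}^{n+1} ∏_{j=1}^{n+1} (q a_i⁻¹ b_j⁻¹)_∞ · (−1)ⁿ · ∏_{1≤i<j≤n} x_j θ(x_i/x_j) / ∏_{i=1}^n ∏_{j=1}^{n+1} θ(b_j x_i) · ∏_{i=1}^n x_i θ(d x_1⁻¹⋯x_n⁻¹ x_i⁻¹) / ∏_{j=1}^{n+1} θ(b_j d x_1⁻¹⋯x_n⁻¹). (Gustafson's A_n summation formula; Theorem 5.2 of the paper.) -/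

import Mathlib

/-!
This is an Ismail-type argument. Put `αⱼ = aⱼ⁻¹` and `X = (x₁,…,xₙ, d/(x₁⋯xₙ))`, so that the lattice
consists of the points `zᵢ = Xᵢ q^{μᵢ}` with `μ ∈ ℤ^{n+1}` and `∑ᵢ μᵢ = 0`; both sides are functions
of `α`.

If `αⱼ = q^{Nⱼ}/Xⱼ` with `Nⱼ ∈ ℕ` for all `j`, the summand vanishes unless `μᵢ ≥ -Nᵢ` for all `i`,
and with `aᵢ = Xᵢ q^{-Nᵢ}` the series is a finite sum over `zᵢ = aᵢ q^{lᵢ}`, `l ∈ ℕ^{n+1}`,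
`∑ᵢ lᵢ = N := ∑ᵢ Nᵢ`. Replacing the column of ones of the Vandermonde matrix by `∏ⱼ (1 - cⱼ zᵢ)`
multiplies its determinant by `1 - ∏ⱼ cⱼ zⱼ`. With `c = α` on level `N + 1`, `c = b` on level `N`,
and the `q`-difference equation of the weight, this gives a first-order recursion in `N`, which
matches the quasi-periodicity of the theta functions.

In general, the weight of one variable, even after multiplication by the powers of `zᵢ` in the
Vandermonde product, decays geometrically as `μᵢ → -∞` and is bounded as `μᵢ → ∞`. As `∑ᵢ μᵢ = 0`,
the negative parts of `μ` control all of `μ`, so the series converges absolutely, locally uniformly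
in `α`, and both sides are holomorphic in each `αⱼ`. The points `q^N/Xⱼ` accumulate at `αⱼ = 0`,
inside the domain of holomorphy, so the identity theorem frees the `αⱼ` one after another.
-/

open scoped BigOperators
open Finset

/-- The infinite q-Pochhammer symbol `(a)_∞ = ∏_{i=0}^∞ (1 - qⁱ a)`. -/
noncomputable def qp (q a : ℂ) : ℂ := ∏' i : ℕ, (1 - q ^ i * a)

/-- The theta function `θ(a) = (a)_∞ (q/a)_∞`. -/
noncomputable def th (q a : ℂ) : ℂ := qp q a * qp q (q / a)

/-- The point `z = (x₁qᵛ¹,…,x_nqᵛⁿ, d z₁⁻¹⋯z_n⁻¹)` of the Gustafson lattice. -/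
noncomputable def gz {n : ℕ} (q d : ℂ) (x : Fin n → ℂ) (ν : Fin n → ℤ) : Fin (n + 1) → ℂ :=
  Fin.snoc (fun k => x k * q ^ ν k) (d * (∏ k, x k * q ^ ν k)⁻¹)

/-- Summand of the Jackson integral of Gustafson's `A_n` type. -/
noncomputable def gTerm {n : ℕ} (q d : ℂ) (a b : Fin (n + 1) → ℂ) (x : Fin n → ℂ)
    (ν : Fin n → ℤ) : ℂ :=
  (∏ i, ∏ j, qp q (q * (a j)⁻¹ * gz q d x ν i) / qp q (b j * gz q d x ν i)) *
    ∏ i, ∏ j ∈ Finset.Ioi i, (gz q d x ν j - gz q d x ν i)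

/-- The Jackson integral of Gustafson's `A_n` type `K(x)`. -/
noncomputable def gSum {n : ℕ} (q d : ℂ) (a b : Fin (n + 1) → ℂ) (x : Fin n → ℂ) : ℂ :=
  (1 - q) ^ n * ∑' ν : Fin n → ℤ, gTerm q d a b x ν

open Filter Topology

section OrderedPairs

variable {ι M : Type*} [CommMonoid M]

lemma prod_prod_Ioi_castSucc {n : ℕ} (f : Fin (n + 1) → Fin (n + 1) → M) :
    ∏ i, ∏ j ∈ Ioi i, f i j =
      (∏ i : Fin n, ∏ j ∈ Ioi i, f i.castSucc j.castSucc) *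
        ∏ i : Fin n, f i.castSucc (Fin.last n) := by
  have prod_Ioi {m : ℕ} (g : Fin m → M) (i : Fin m) :
      ∏ j ∈ Ioi i, g j = ∏ j, if i < j then g j else 1 := by
    rw [← prod_filter, filter_lt_eq_Ioi]
  simp only [prod_Ioi, Fin.prod_univ_castSucc, Fin.castSucc_lt_castSucc_iff, Fin.castSucc_lt_last,
    if_true, prod_mul_distrib, (Fin.castSucc_lt_last _).not_gt, lt_irrefl, if_false, prod_const_one,
    mul_one]

variable [Fintype ι] [LinearOrder ι] [LocallyFiniteOrderTop ι] [LocallyFiniteOrderBot ι]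

lemma prod_prod_Ioi_ite_eq (r : ι → M) (l : ι) :
    ∏ i, ∏ j ∈ Ioi i, ((if i = l then r j else 1) * (if j = l then r i else 1)) =
      ∏ i ∈ univ.erase l, r i := by
  have left_factors : ∏ i, ∏ j ∈ Ioi i, (if i = l then r j else 1) = ∏ j ∈ Ioi l, r j := by
    rw [prod_eq_single l (fun i _ hi => by simp [hi]) (by simp)]
    simp
  have right_factors : ∏ i, ∏ j ∈ Ioi i, (if j = l then r i else 1) = ∏ i ∈ Iio l, r i := by
    simp only [prod_ite_eq', mem_Ioi]
    rw [← prod_filter, filter_gt_eq_Iio]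
  have erase_eq : univ.erase l = Ioi l ∪ Iio l := by
    ext i
    simp [lt_or_lt_iff_ne, ne_comm]
  have disj : Disjoint (Ioi l) (Iio l) :=
    disjoint_left.2 fun i hi hi' => lt_asymm (mem_Ioi.1 hi) (mem_Iio.1 hi')
  simp only [prod_mul_distrib]
  rw [left_factors, right_factors, erase_eq, prod_union disj]

lemma prod_prod_Ioi_update {α : Type*} (f : α → α → M) (X : ι → α) (l : ι) (w : α) (r : ι → M)
    (hleft : ∀ j, l < j → f w (X j) = f (X l) (X j) * r j)
    (hright : ∀ i, i < l → f (X i) w = f (X i) (X l) * r i) :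
    ∏ i, ∏ j ∈ Ioi i, f (Function.update X l w i) (Function.update X l w j) =
      (∏ i, ∏ j ∈ Ioi i, f (X i) (X j)) * ∏ i ∈ univ.erase l, r i := by
  simp only [← prod_prod_Ioi_ite_eq r l, ← prod_mul_distrib]
  refine prod_congr rfl fun i _ => prod_congr rfl fun j hj => ?_
  have hij : i < j := mem_Ioi.1 hj
  by_cases hi : i = l
  · subst hi
    simp [hij.ne', hleft j hij]
  · by_cases hj : j = l
    · subst hj
      simp [hi, hright i hij]
    · simp [hi, hj]

end OrderedPairs

section Summation

lemma sum_piAntidiag_succ {ι M : Type*} [Fintype ι] [DecidableEq ι] [AddCommMonoid M] (N : ℕ)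
    (i : ι) {f : (ι → ℕ) → M} (hf : ∀ l, l i = 0 → f l = 0) :
    ∑ l ∈ piAntidiag univ (N + 1), f l = ∑ l ∈ piAntidiag univ N, f (l + Pi.single i 1) := by
  refine (sum_of_injOn (· + Pi.single i 1) (fun l _ l' _ h => add_right_cancel h) ?_ ?_
    fun _ _ => rfl).symm
  · intro l hl
    simp_all [sum_add_distrib]
  · intro l hl hnot
    by_contra hfl
    have hle : Pi.single i 1 ≤ l :=
      update_le_iff.2 ⟨Nat.one_le_iff_ne_zero.2 (mt (hf l) hfl), fun _ _ => Nat.zero_le _⟩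
    obtain ⟨l', rfl⟩ := exists_add_of_le hle
    exact hnot ⟨l', by simp_all [sum_add_distrib, add_comm 1], add_comm _ _⟩

lemma sum_natAbs_eq_two_mul_sum_toNat_neg {ι : Type*} [Fintype ι] {μ : ι → ℤ}
    (hμ : ∑ i, μ i = 0) : ∑ i, (μ i).natAbs = 2 * ∑ i, (-μ i).toNat := by
  have h (m : ℤ) : (m.natAbs : ℤ) = m + 2 * (-m).toNat := by omega
  zify
  simp only [← Int.natCast_natAbs, h, sum_add_distrib, hμ, mul_sum, zero_add]

lemma summable_prod_fin {β : Type*} {f : β → ℝ} (hf : Summable f) (hf0 : ∀ b, 0 ≤ f b) (n : ℕ) :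
    Summable fun ν : Fin n → β => ∏ k, f (ν k) := by
  induction n with
  | zero => exact Summable.of_finite
  | succ n ih =>
    have h := hf.mul_of_nonneg ih hf0 fun ν => prod_nonneg fun k _ => hf0 _
    rw [← (Fin.consEquiv fun _ => β).summable_iff]
    simpa [Function.comp_def, Fin.prod_univ_succ, Fin.consEquiv] using h

lemma summable_pow_natAbs {s : ℝ} (hs0 : 0 ≤ s) (hs1 : s < 1) :
    Summable fun ν : ℤ => s ^ ν.natAbs :=
  .of_nat_of_neg (by simpa using summable_geometric_of_lt_one hs0 hs1)
    (by simpa using summable_geometric_of_lt_one hs0 hs1)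

lemma bddAbove_range_int_of_tendsto {f : ℤ → ℝ} {x y : ℝ}
    (hx : Tendsto (fun k : ℕ => f k) atTop (𝓝 x)) (hy : Tendsto (fun k : ℕ => f (-k)) atTop (𝓝 y)) :
    BddAbove (Set.range f) := by
  refine (hx.bddAbove_range.union hy.bddAbove_range).mono ?_
  rintro _ ⟨ν, rfl⟩
  obtain ⟨k, rfl | rfl⟩ := ν.eq_nat_or_neg
  exacts [.inl ⟨k, rfl⟩, .inr ⟨k, rfl⟩]

end Summation

section IdentityTheorem

variable {E : Type*} [NormedAddCommGroup E] [NormedSpace ℂ E] [CompleteSpace E]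

lemma differentiableAt_tsum_of_eventually_norm_le {β : Type*} {f : β → ℂ → E} {v : β → ℝ} {w : ℂ}
    (hv : Summable v) (hf : ∀ i, Differentiable ℂ (f i))
    (hfv : ∀ᶠ z in 𝓝 w, ∀ i, ‖f i z‖ ≤ v i) :
    DifferentiableAt ℂ (fun z => ∑' i, f i z) w := by
  obtain ⟨U, hU, hUopen, hwU⟩ := eventually_nhds_iff.1 hfv
  exact (Complex.differentiableOn_tsum_of_summable_norm hv (fun i => (hf i).differentiableOn) hUopen
    fun i z hz => hU z hz i).differentiableAt (hUopen.mem_nhds hwU)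

/-- The identity theorem frees the variables from the sets `T j` one by one. -/
lemma eqOn_of_separately_differentiable {ι : Type*} [Finite ι] [DecidableEq ι]
    {U : Set (ι → ℂ)} {T : ι → Set ℂ} {F G : (ι → ℂ) → E} (hU : IsOpen U)
    (hconn : ∀ α ∈ U, ∀ j, IsPreconnected {w | Function.update α j w ∈ U})
    (hzero : ∀ α ∈ U, ∀ j, Function.update α j 0 ∈ U) (hT : ∀ j, ∃ᶠ w in 𝓝[≠] 0, w ∈ T j)
    (hF : ∀ α ∈ U, ∀ j, DifferentiableAt ℂ (fun w => F (Function.update α j w)) (α j))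
    (hG : ∀ α ∈ U, ∀ j, DifferentiableAt ℂ (fun w => G (Function.update α j w)) (α j))
    (hFG : ∀ α ∈ U, (∀ j, α j ∈ T j) → F α = G α) : Set.EqOn F G U := by
  cases nonempty_fintype ι
  suffices h : ∀ s : Finset ι, ∀ α ∈ U, (∀ j ∉ s, α j ∈ T j) → F α = G α from
    fun α hα => h univ α hα (by simp)
  intro s
  induction s using Finset.induction_on with
  | empty => exact fun α hα hαT => hFG α hα fun j => hαT j (notMem_empty j)
  | insert j s _ ih =>
    intro α hα hαT
    have hslice : IsOpen {w | Function.update α j w ∈ U} :=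
      hU.preimage (continuous_const.update j continuous_id)
    have analytic {H : (ι → ℂ) → E}
        (hH : ∀ α ∈ U, ∀ j, DifferentiableAt ℂ (fun w => H (Function.update α j w)) (α j)) :
        AnalyticOnNhd ℂ (fun w => H (Function.update α j w)) {w | Function.update α j w ∈ U} :=
      DifferentiableOn.analyticOnNhd
        (fun w hw => by simpa using (hH _ hw j).differentiableWithinAt) hslice
    have hfreq : ∃ᶠ w in 𝓝[≠] 0, F (Function.update α j w) = G (Function.update α j w) := by
      have hmem : ∀ᶠ w in 𝓝[≠] 0, Function.update α j w ∈ U :=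
        nhdsWithin_le_nhds (hslice.mem_nhds (hzero α hα j))
      refine ((hT j).and_eventually hmem).mono fun w ⟨hwT, hw⟩ => ih _ hw fun k hk => ?_
      rcases eq_or_ne k j with rfl | hkj
      · simpa using hwT
      · simpa [hkj] using hαT k (by simp [hkj, hk])
    simpa using (analytic hF).eqOn_of_preconnected_of_frequently_eq (analytic hG) (hconn α hα j)
      (hzero α hα j) hfreq (show Function.update α j (α j) ∈ U by simpa using hα)

end IdentityTheorem

section Vandermonde

open Polynomial

variable {R : Type*} [CommRing R] {n : ℕ}

lemma degree_prod_sub_prod_lt {ι : Type*} (s : Finset ι) {f g : ι → R[X]}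
    (hf : ∀ i ∈ s, (f i).natDegree ≤ 1) (hg : ∀ i ∈ s, (g i).natDegree ≤ 1)
    (hfg : ∀ i ∈ s, (f i).coeff 1 = (g i).coeff 1) :
    (∏ i ∈ s, f i - ∏ i ∈ s, g i).degree < #s := by
  have natDegree_le {h : ι → R[X]} (hh : ∀ i ∈ s, (h i).natDegree ≤ 1) :
      (∏ i ∈ s, h i).natDegree ≤ #s :=
    (natDegree_prod_le _ _).trans (by simpa using sum_le_sum hh)
  refine (degree_lt_iff_coeff_zero _ _).2 fun m hm => ?_
  rw [coeff_sub]
  rcases hm.eq_or_lt with rfl | hm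
  · have hf_top := coeff_prod_of_natDegree_le s f 1 hf
    have hg_top := coeff_prod_of_natDegree_le s g 1 hg
    rw [mul_one] at hf_top hg_top
    rw [hf_top, hg_top, prod_congr rfl hfg, sub_self]
  · rw [coeff_eq_zero_of_natDegree_lt ((natDegree_le hf).trans_lt hm),
      coeff_eq_zero_of_natDegree_lt ((natDegree_le hg).trans_lt hm), sub_self]

/-- The cofactor of the `i`-th entry of the column of ones in the Vandermonde matrix of `z`. -/
noncomputable def vandermondeCofactor (z : Fin (n + 1) → R) (i : Fin (n + 1)) : R :=
  (Matrix.vandermonde z).adjugate 0 i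

lemma vandermondeCofactor_update (z : Fin (n + 1) → R) (i : Fin (n + 1)) (w : R) :
    vandermondeCofactor (Function.update z i w) i = vandermondeCofactor z i := by
  simp only [vandermondeCofactor, Matrix.adjugate_apply]
  congr 1
  ext k j
  rcases eq_or_ne k i with rfl | hk
  · simp
  · simp [Matrix.vandermonde_apply, hk]

lemma sum_eval_mul_vandermondeCofactor (z : Fin (n + 1) → R) {Q : R[X]}
    (hQ : Q.degree < (n + 1 : ℕ)) :
    ∑ i, Q.eval (z i) * vandermondeCofactor z i =
      Q.coeff 0 * ∏ i, ∏ j ∈ Ioi i, (z j - z i) := by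
  have eval_eq : (fun i => Q.eval (z i)) = (Matrix.vandermonde z).mulVec fun k => Q.coeff k := by
    funext i
    rw [eval_eq_sum_degreeLTEquiv (mem_degreeLT.2 hQ)]
    exact sum_congr rfl fun k _ => mul_comm _ _
  have adjugate_mulVec := congrFun (Matrix.mulVec_mulVec (fun k : Fin (n + 1) => Q.coeff k)
    (Matrix.vandermonde z).adjugate (Matrix.vandermonde z)) 0
  rw [← eval_eq, Matrix.adjugate_mul, Matrix.det_vandermonde] at adjugate_mulVec
  simpa [Matrix.mulVec, dotProduct, Matrix.one_apply, vandermondeCofactor, mul_comm]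
    using adjugate_mulVec

/-- The polynomial `∏ⱼ (1 - cⱼ w) - ∏ⱼ (cⱼ zⱼ - cⱼ w)` in `w` has degree at most `n`, agrees with
`∏ⱼ (1 - cⱼ w)` at every `zᵢ`, and has constant term `1 - ∏ⱼ cⱼ zⱼ`. -/
lemma sum_prod_one_sub_mul_vandermondeCofactor (c z : Fin (n + 1) → R) :
    ∑ i, (∏ j, (1 - c j * z i)) * vandermondeCofactor z i =
      (1 - (∏ j, c j) * ∏ i, z i) * ∏ i, ∏ j ∈ Ioi i, (z j - z i) := by
  let Q : R[X] := ∏ j, (1 - C (c j) * X) - ∏ j, (C (c j * z j) - C (c j) * X)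
  have hQ : Q.degree < (n + 1 : ℕ) := by
    have h := degree_prod_sub_prod_lt (univ : Finset (Fin (n + 1)))
      (f := fun j => 1 - C (c j) * X) (g := fun j => C (c j * z j) - C (c j) * X)
      (fun j _ => by compute_degree) (fun j _ => by compute_degree)
      (fun j _ => by simp [coeff_one, -map_mul, coeff_C])
    rwa [card_univ, Fintype.card_fin] at h
  have eval_eq (i : Fin (n + 1)) : Q.eval (z i) = ∏ j, (1 - c j * z i) := by
    have hzero : ∏ j, (c j * z j - c j * z i) = 0 := prod_eq_zero (mem_univ i) (sub_self _)
    simp [Q, eval_prod, hzero]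
  have coeff_zero_eq : Q.coeff 0 = 1 - (∏ j, c j) * ∏ i, z i := by
    simp [Q, coeff_zero_eq_eval_zero, eval_prod, prod_mul_distrib]
  simpa only [eval_eq, coeff_zero_eq] using sum_eval_mul_vandermondeCofactor z hQ

lemma norm_vandermonde_le {K : Type*} [NormedField K] {m : ℕ} (z : Fin m → K) :
    ‖∏ i, ∏ j ∈ Ioi i, (z j - z i)‖ ≤ ∑ σ : Equiv.Perm (Fin m), ∏ i, ‖z i‖ ^ (σ i : ℕ) := by
  rw [← Matrix.det_vandermonde, ← Matrix.det_transpose, Matrix.det_apply']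
  refine (norm_sum_le _ _).trans (sum_le_sum fun σ _ => ?_)
  have norm_sign : ‖((Equiv.Perm.sign σ : ℤ) : K)‖ = 1 := by
    rcases Int.units_eq_one_or (Equiv.Perm.sign σ) with h | h <;> simp [h]
  simp [norm_sign, Matrix.vandermonde_apply]

end Vandermonde

section QPochhammer

variable {q : ℂ}

lemma summable_norm_pow_mul (hq : ‖q‖ < 1) (a : ℂ) : Summable fun i : ℕ => ‖-(q ^ i * a)‖ := by
  simpa only [norm_neg, norm_mul, norm_pow] using
    (summable_geometric_of_lt_one (norm_nonneg _) hq).mul_right ‖a‖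

lemma multipliable_qp (hq : ‖q‖ < 1) (a : ℂ) : Multipliable fun i : ℕ => 1 - q ^ i * a := by
  simpa [sub_eq_add_neg] using multipliable_one_add_of_summable (summable_norm_pow_mul hq a)

lemma tendsto_prod_range_qp (hq : ‖q‖ < 1) (a : ℂ) :
    Tendsto (fun M => ∏ i ∈ range M, (1 - q ^ i * a)) atTop (𝓝 (qp q a)) :=
  (multipliable_qp hq a).hasProd.tendsto_prod_nat

lemma qp_eq_prod_range_mul (hq : ‖q‖ < 1) (a : ℂ) (N : ℕ) :
    qp q a = (∏ i ∈ range N, (1 - q ^ i * a)) * qp q (q ^ N * a) := by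
  have hshift : ∀ i, 1 - q ^ i * (q ^ N * a) = 1 - q ^ (i + N) * a := fun i => by ring
  simp only [qp, hshift]
  exact (Multipliable.prod_mul_tprod_nat_mul' (by
    simpa only [hshift] using multipliable_qp hq (q ^ N * a))).symm

lemma qp_eq_one_sub_mul (hq : ‖q‖ < 1) (a : ℂ) : qp q a = (1 - a) * qp q (q * a) := by
  simpa using qp_eq_prod_range_mul hq a 1

lemma qp_zero_right (q : ℂ) : qp q 0 = 1 := by simp [qp]

lemma qp_eq_zero_of_pow_mul_eq_one {a : ℂ} {k : ℕ} (h : q ^ k * a = 1) : qp q a = 0 :=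
  tprod_of_exists_eq_zero ⟨k, sub_eq_zero.2 h.symm⟩

lemma qp_ne_zero (hq : ‖q‖ < 1) {a : ℂ} (h : ∀ i : ℕ, q ^ i * a ≠ 1) : qp q a ≠ 0 := by
  simpa [qp, sub_eq_add_neg] using tprod_one_add_ne_zero_of_summable
    (fun i => by simpa [← sub_eq_add_neg] using sub_ne_zero.2 (h i).symm)
    (summable_norm_pow_mul hq a)

lemma qp_ne_zero_of_norm_lt_one (hq : ‖q‖ < 1) {a : ℂ} (ha : ‖a‖ < 1) : qp q a ≠ 0 := by
  refine qp_ne_zero hq fun i hi => ?_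
  have hlt : ‖q ^ i * a‖ < 1 := by
    rw [norm_mul, norm_pow]
    exact mul_lt_one_of_nonneg_of_lt_one_right (pow_le_one₀ (norm_nonneg _) hq.le)
      (norm_nonneg _) ha
  simp [hi] at hlt

lemma qp_ne_zero_of_ne_zpow (hq : ‖q‖ < 1) {a : ℂ} (ha : ∀ m : ℤ, a ≠ q ^ m) : qp q a ≠ 0 :=
  qp_ne_zero hq fun i hi => ha (-i) (by
    rw [zpow_neg, zpow_natCast]
    exact eq_inv_of_mul_eq_one_right hi)

lemma differentiable_qp (hq : ‖q‖ < 1) : Differentiable ℂ (qp q) := by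
  intro a
  have hprod := Summable.hasProdLocallyUniformlyOn_nat_one_add
    (f := fun (i : ℕ) (w : ℂ) => -(q ^ i * w)) (K := Metric.ball 0 (‖a‖ + 1)) Metric.isOpen_ball
    (u := fun i => ‖q‖ ^ i * (‖a‖ + 1))
    ((summable_geometric_of_lt_one (norm_nonneg _) hq).mul_right _)
    (Eventually.of_forall fun i w hw => by
      rw [norm_neg, norm_mul, norm_pow]
      gcongr
      exact (mem_ball_zero_iff.1 hw).le)
    (fun i => by fun_prop)
  have hdiff := hprod.differentiableOn
    (Eventually.of_forall fun s => .fun_finsetProd fun i _ => by fun_prop) Metric.isOpen_ball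
  simp only [← sub_eq_add_neg] at hdiff
  exact hdiff.differentiableAt (Metric.isOpen_ball.mem_nhds (by simp))

lemma norm_qp_le (hq : ‖q‖ < 1) {w : ℂ} {c : ℝ} (hw : ‖w‖ ≤ c) :
    ‖qp q w‖ ≤ ‖qp (‖q‖ : ℂ) (-(c : ℂ))‖ := by
  refine le_of_tendsto_of_tendsto' (tendsto_prod_range_qp hq w).norm
    (tendsto_prod_range_qp (by simpa using hq) _).norm fun M => ?_
  rw [norm_prod, norm_prod]
  refine prod_le_prod (fun _ _ => norm_nonneg _) fun i _ => ?_
  have hc : 0 ≤ c := (norm_nonneg _).trans hw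
  have norm_factor : ‖1 - (‖q‖ : ℂ) ^ i * -(c : ℂ)‖ = 1 + ‖q‖ ^ i * c := by
    rw [← Real.norm_of_nonneg (by positivity : 0 ≤ 1 + ‖q‖ ^ i * c), ← Complex.norm_real]
    push_cast
    ring_nf
  calc ‖1 - q ^ i * w‖ ≤ ‖(1 : ℂ)‖ + ‖q ^ i * w‖ := norm_sub_le _ _
    _ ≤ 1 + ‖q‖ ^ i * c := by
      rw [norm_one, norm_mul, norm_pow]
      gcongr
    _ = _ := norm_factor.symm

end QPochhammer

section Theta

variable {q : ℂ}

lemma th_mul_left (hq : ‖q‖ < 1) (hq0 : q ≠ 0) {a : ℂ} (ha : a ≠ 0) :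
    th q (q * a) = -a⁻¹ * th q a := by
  have hdiv : q / (q * a) = a⁻¹ := by field_simp
  rw [th, th, qp_eq_one_sub_mul hq a, hdiv, qp_eq_one_sub_mul hq a⁻¹, ← div_eq_mul_inv]
  field_simp
  ring

lemma th_inv (hq : ‖q‖ < 1) {a : ℂ} (ha : a ≠ 0) : th q a⁻¹ = -a⁻¹ * th q a := by
  have hdiv : q / a⁻¹ = q * a := by field_simp
  rw [th, th, qp_eq_one_sub_mul hq a, hdiv, qp_eq_one_sub_mul hq a⁻¹, ← div_eq_mul_inv]
  field_simp
  ring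

lemma th_ne_zero (hq : ‖q‖ < 1) (hq0 : q ≠ 0) {a : ℂ} (ha : ∀ m : ℤ, a ≠ q ^ m) : th q a ≠ 0 := by
  refine mul_ne_zero (qp_ne_zero_of_ne_zpow hq ha) (qp_ne_zero_of_ne_zpow hq fun m hm => ?_)
  refine ha (1 - m) ?_
  rw [zpow_sub₀ hq0, zpow_one, ← hm, div_div_cancel₀ hq0]

/-- The theta analogue `y θ(x/y)` of the difference `y - x`, the factor attached to a pair of
variables in the theta counterpart of the Vandermonde product. -/
noncomputable def thetaSub (q x y : ℂ) : ℂ := y * th q (x / y)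

lemma thetaSub_swap (hq : ‖q‖ < 1) {x y : ℂ} (hx : x ≠ 0) (hy : y ≠ 0) :
    thetaSub q y x = -thetaSub q x y := by
  rw [thetaSub, thetaSub, ← inv_div, th_inv hq (div_ne_zero hx hy)]
  field_simp

lemma thetaSub_mul_left (hq : ‖q‖ < 1) (hq0 : q ≠ 0) {x y : ℂ} (hx : x ≠ 0) (hy : y ≠ 0) :
    thetaSub q (q * x) y = thetaSub q x y * -(y / x) := by
  rw [thetaSub, thetaSub, mul_div_assoc, th_mul_left hq hq0 (div_ne_zero hx hy), inv_div]
  ring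

lemma thetaSub_mul_right (hq : ‖q‖ < 1) (hq0 : q ≠ 0) {x y : ℂ} (hx : x ≠ 0) (hy : y ≠ 0) :
    thetaSub q x (q * y) = thetaSub q x y * -(x / y) := by
  rw [thetaSub_swap hq (mul_ne_zero hq0 hy) hx, thetaSub_mul_left hq hq0 hy hx,
    thetaSub_swap hq hx hy]
  ring

lemma thetaSub_eq_sub_mul (hq : ‖q‖ < 1) (x : ℂ) {y : ℂ} (hy : y ≠ 0) :
    thetaSub q x y = (y - x) * (qp q (q * x / y) * qp q (q * y / x)) := by
  rw [thetaSub, th, qp_eq_one_sub_mul hq (x / y), ← mul_div_assoc, div_div_eq_mul_div]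
  field_simp

end Theta

section Growth

variable {q : ℂ}

lemma tendsto_qp_mul_pow (hq : ‖q‖ < 1) (w : ℂ) :
    Tendsto (fun k : ℕ => qp q (w * q ^ k)) atTop (𝓝 1) := by
  have hpow : Tendsto (fun k : ℕ => w * q ^ k) atTop (𝓝 0) := by
    simpa using (tendsto_pow_atTop_nhds_zero_of_norm_lt_one hq).const_mul w
  simpa [Function.comp_def, qp_zero_right] using
    ((differentiable_qp hq).continuous.tendsto 0).comp hpow

lemma qp_div_pow (hq : ‖q‖ < 1) (hq0 : q ≠ 0) {w : ℂ} (hw : w ≠ 0) (k : ℕ) :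
    qp q (w / q ^ k) = (∏ i ∈ range k, -(w / q ^ (i + 1))) *
      (qp q w * ∏ i ∈ range k, (1 - q ^ i * (q / w))) := by
  induction k with
  | zero => simp
  | succ k ih =>
    have hstep : q * (w / q ^ (k + 1)) = w / q ^ k := by rw [pow_succ']; field_simp
    have hfactor : 1 - w / q ^ (k + 1) = -(w / q ^ (k + 1)) * (1 - q ^ k * (q / w)) := by
      field_simp
      ring
    rw [qp_eq_one_sub_mul hq, hstep, ih, hfactor, prod_range_succ, prod_range_succ]
    ring

lemma tendsto_norm_qp_div_pow (hq : ‖q‖ < 1) (hq0 : q ≠ 0) {w : ℂ} (hw : w ≠ 0) :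
    Tendsto (fun k : ℕ => ‖qp q (w / q ^ k)‖ / ∏ i ∈ range k, (‖w‖ / ‖q‖ ^ (i + 1))) atTop
      (𝓝 ‖th q w‖) := by
  refine ((tendsto_prod_range_qp hq (q / w)).const_mul (qp q w)).norm.congr fun k => ?_
  have hne : ∏ i ∈ range k, (‖w‖ / ‖q‖ ^ (i + 1)) ≠ 0 := by positivity
  rw [qp_div_pow hq hq0 hw, norm_mul (∏ i ∈ range k, -(w / q ^ (i + 1))), norm_prod]
  simp only [norm_neg, norm_div, norm_pow]
  rw [mul_div_cancel_left₀ _ hne]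

lemma exists_norm_qp_div_norm_qp_le {p : ℂ} (hq : ‖q‖ < 1) (hq0 : q ≠ 0) (hp : ‖p‖ = ‖q‖) {u y : ℂ}
    (hu : u ≠ 0) (hy0 : y ≠ 0) (hy : ∀ m : ℤ, y ≠ q ^ m) :
    ∃ C : ℝ, 0 < C ∧ ∀ ν : ℤ,
      ‖qp p (u * p ^ ν)‖ / ‖qp q (y * q ^ ν)‖ ≤ C * (‖u‖ / ‖y‖) ^ (-ν).toNat := by
  have hp1 : ‖p‖ < 1 := hp ▸ hq
  have hp0 : p ≠ 0 := norm_pos_iff.1 (hp ▸ norm_pos_iff.2 hq0)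
  set f : ℤ → ℝ := fun ν =>
    ‖qp p (u * p ^ ν)‖ / ‖qp q (y * q ^ ν)‖ / (‖u‖ / ‖y‖) ^ (-ν).toNat
  have f_natCast : Tendsto (fun k : ℕ => f k) atTop (𝓝 (‖(1 : ℂ)‖ / ‖(1 : ℂ)‖)) := by
    simpa [f, Pi.div_def] using
      (tendsto_qp_mul_pow hp1 u).norm.div (tendsto_qp_mul_pow hq y).norm (by simp)
  have f_neg_natCast : Tendsto (fun k : ℕ => f (-k)) atTop (𝓝 (‖th p u‖ / ‖th q y‖)) := by
    refine ((tendsto_norm_qp_div_pow hp1 hp0 hu).div (tendsto_norm_qp_div_pow hq hq0 hy0)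
      (norm_ne_zero_iff.2 (th_ne_zero hq hq0 hy))).congr fun k => ?_
    simp only [Pi.div_apply, f, zpow_neg, zpow_natCast, ← div_eq_mul_inv, neg_neg,
      Int.toNat_natCast, div_div_div_eq, prod_div_distrib, prod_const, card_range, hp, div_pow]
    field_simp
  obtain ⟨C, hC⟩ := bddAbove_range_int_of_tendsto f_natCast f_neg_natCast
  refine ⟨max C 1, by positivity, fun ν => ?_⟩
  rw [← div_le_iff₀ (by positivity)]
  exact (hC ⟨ν, rfl⟩).trans (le_max_left _ _)

lemma exists_norm_qp_div_qp_le (hq : ‖q‖ < 1) (hq0 : q ≠ 0) {y : ℂ} (hy0 : y ≠ 0)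
    (hy : ∀ m : ℤ, y ≠ q ^ m) {c : ℝ} (hc : 0 < c) :
    ∃ C : ℝ, 0 < C ∧ ∀ w : ℂ, ‖w‖ ≤ c → ∀ ν : ℤ,
      ‖qp q (w * q ^ ν) / qp q (y * q ^ ν)‖ ≤ C * (c / ‖y‖) ^ (-ν).toNat := by
  obtain ⟨C, hC0, hC⟩ := exists_norm_qp_div_norm_qp_le (p := (‖q‖ : ℂ)) (u := -(c : ℂ)) hq hq0
    (by simp) (by exact_mod_cast (neg_neg_of_pos hc).ne) hy0 hy
  refine ⟨C, hC0, fun w hw ν => ?_⟩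
  have hwν : ‖w * q ^ ν‖ ≤ c * ‖q‖ ^ ν := by
    rw [norm_mul, norm_zpow]
    gcongr
  calc ‖qp q (w * q ^ ν) / qp q (y * q ^ ν)‖
      ≤ ‖qp (‖q‖ : ℂ) (-(c : ℂ) * (‖q‖ : ℂ) ^ ν)‖ / ‖qp q (y * q ^ ν)‖ := by
        rw [norm_div]
        gcongr
        simpa using norm_qp_le hq hwν
    _ ≤ C * (c / ‖y‖) ^ (-ν).toNat := by simpa [abs_of_pos hc] using hC ν

end Growth

section TerminatingSum

lemma mul_pow_add_single {ι M : Type*} [DecidableEq ι] [CommMonoid M] (a : ι → M) (q : M)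
    (l : ι → ℕ) (i k : ι) :
    a k * q ^ (l + Pi.single i 1 : ι → ℕ) k =
      Function.update (fun k => a k * q ^ l k) i (q * (a i * q ^ l i)) k := by
  rcases eq_or_ne k i with rfl | hk
  · simp [pow_succ', mul_left_comm]
  · simp [hk]

/-- The one-variable weight of the Jackson integral. It is written in terms of `αⱼ = aⱼ⁻¹`, in which
it is entire, so that `αⱼ` can be continued to `0`. -/
noncomputable def jacksonWeight {ι : Type*} [Fintype ι] (q : ℂ) (α b : ι → ℂ) (w : ℂ) : ℂ :=
  ∏ j, qp q (q * α j * w) / qp q (b j * w)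

lemma jacksonWeight_mul_left {ι : Type*} [Fintype ι] {q : ℂ} (hq : ‖q‖ < 1) (α : ι → ℂ) {b : ι → ℂ}
    {w : ℂ} (hw : ∀ j, b j * w ≠ 1) :
    jacksonWeight q α b (q * w) * ∏ j, (1 - α j * (q * w)) =
      jacksonWeight q α b w * ∏ j, (1 - b j * w) := by
  simp only [jacksonWeight, ← prod_mul_distrib]
  refine prod_congr rfl fun j _ => ?_
  have hj : 1 - b j * w ≠ 0 := sub_ne_zero.2 (hw j).symm
  have hα : qp q (q * α j * w) = (1 - α j * (q * w)) * qp q (q * α j * (q * w)) := by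
    rw [qp_eq_one_sub_mul hq]
    ring_nf
  rw [hα, qp_eq_one_sub_mul hq (b j * w), mul_left_comm q (b j) w, mul_div_mul_comm,
    mul_right_comm (_ / (1 - b j * w)), div_mul_cancel₀ _ hj, mul_comm]

/-- The summand of the Jackson integral at the point `z`, with `αⱼ = aⱼ⁻¹`. -/
noncomputable def jacksonTerm {m : ℕ} (q : ℂ) (α b z : Fin m → ℂ) : ℂ :=
  (∏ i, jacksonWeight q α b (z i)) * ∏ i, ∏ j ∈ Ioi i, (z j - z i)

variable {n : ℕ} {q : ℂ}

lemma one_sub_mul_jacksonTerm (q : ℂ) (α b c z : Fin (n + 1) → ℂ) :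
    (1 - (∏ j, c j) * ∏ i, z i) * jacksonTerm q α b z =
      ∑ i, (∏ k, jacksonWeight q α b (z k)) * (∏ j, (1 - c j * z i)) * vandermondeCofactor z i := by
  rw [jacksonTerm, mul_left_comm, ← sum_prod_one_sub_mul_vandermondeCofactor, mul_sum]
  simp only [mul_assoc]

lemma prod_jacksonWeight_update (hq : ‖q‖ < 1) (α : Fin (n + 1) → ℂ) {b z : Fin (n + 1) → ℂ}
    {i : Fin (n + 1)} (hz : ∀ j, b j * z i ≠ 1) :
    (∏ k, jacksonWeight q α b (Function.update z i (q * z i) k)) * ∏ j, (1 - α j * (q * z i)) =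
      (∏ k, jacksonWeight q α b (z k)) * ∏ j, (1 - b j * z i) := by
  have hshift := jacksonWeight_mul_left hq α hz
  have herase : ∏ k ∈ univ.erase i, jacksonWeight q α b (Function.update z i (q * z i) k) =
      ∏ k ∈ univ.erase i, jacksonWeight q α b (z k) :=
    prod_congr rfl fun k hk => by rw [Function.update_of_ne (ne_of_mem_erase hk)]
  rw [← mul_prod_erase univ _ (mem_univ i), herase, Function.update_self, mul_right_comm, hshift,
    mul_right_comm, mul_prod_erase univ (fun k => jacksonWeight q α b (z k)) (mem_univ i)]

/-- The sum of the Jackson summands with `αⱼ = aⱼ⁻¹` over the points `aᵢ q^{lᵢ}` with `l ≥ 0` and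
`l₁ + ⋯ + lₘ = N`, to which the Jackson integral reduces in the terminating case. -/
noncomputable def simplexSum {m : ℕ} (q : ℂ) (a b : Fin m → ℂ) (N : ℕ) : ℂ :=
  ∑ l ∈ piAntidiag univ N, jacksonTerm q a⁻¹ b fun i => a i * q ^ l i

variable {a b : Fin (n + 1) → ℂ}

lemma one_sub_mul_simplexSum (q : ℂ) (a b c : Fin (n + 1) → ℂ) (N : ℕ) :
    (1 - (∏ j, c j) * ((∏ i, a i) * q ^ N)) * simplexSum q a b N =
      ∑ i, ∑ l ∈ piAntidiag univ N, (∏ k, jacksonWeight q a⁻¹ b (a k * q ^ l k)) *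
        (∏ j, (1 - c j * (a i * q ^ l i))) * vandermondeCofactor (fun k => a k * q ^ l k) i := by
  rw [simplexSum, mul_sum, sum_comm]
  refine sum_congr rfl fun l hl => ?_
  have hprod : ∏ i, a i * q ^ l i = (∏ i, a i) * q ^ N := by
    rw [prod_mul_distrib, prod_pow_eq_pow_sum, (mem_piAntidiag.1 hl).1]
  rw [← one_sub_mul_jacksonTerm, hprod]

/-- Both sides are expanded by `one_sub_mul_simplexSum`, the left one with `c = a⁻¹` and the right
one with `c = b`; the weights then match under `lᵢ ↦ lᵢ + 1`, and `∏ⱼ (1 - aⱼ⁻¹ zᵢ)` kills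
`lᵢ = 0`. -/
lemma simplexSum_succ (hq : ‖q‖ < 1) (ha : ∀ i, a i ≠ 0)
    (hab : ∀ i j (k : ℕ), b j * (a i * q ^ k) ≠ 1) (N : ℕ) :
    (1 - q ^ (N + 1)) * simplexSum q a b (N + 1) =
      (1 - (∏ j, b j) * ((∏ i, a i) * q ^ N)) * simplexSum q a b N := by
  have hcancel : (∏ j, a⁻¹ j) * ((∏ i, a i) * q ^ (N + 1)) = q ^ (N + 1) := by
    rw [← mul_assoc, ← prod_mul_distrib]
    simp [ha]
  rw [← hcancel, one_sub_mul_simplexSum, one_sub_mul_simplexSum]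
  refine sum_congr rfl fun i _ => ?_
  rw [sum_piAntidiag_succ N i fun l hl => ?_]
  · refine sum_congr rfl fun l _ => ?_
    simp only [mul_pow_add_single, vandermondeCofactor_update, Function.update_self]
    rw [prod_jacksonWeight_update hq _ fun j => hab i j (l i)]
  · have hzero : ∏ j, (1 - a⁻¹ j * (a i * q ^ l i)) = 0 :=
      prod_eq_zero (mem_univ i) (by simp [hl, ha i])
    rw [hzero, mul_zero, zero_mul]

lemma prod_mul_simplexSum (hq : ‖q‖ < 1) (ha : ∀ i, a i ≠ 0)
    (hab : ∀ i j (k : ℕ), b j * (a i * q ^ k) ≠ 1) (N : ℕ) :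
    (∏ k ∈ range N, (1 - q ^ (k + 1))) * simplexSum q a b N =
      (∏ k ∈ range N, (1 - (∏ j, b j) * ((∏ i, a i) * q ^ k))) * jacksonTerm q a⁻¹ b a := by
  induction N with
  | zero => simp [simplexSum]
  | succ N ih =>
    rw [prod_range_succ, prod_range_succ, mul_assoc, simplexSum_succ hq ha hab, mul_left_comm, ih]
    ring

end TerminatingSum

section ThetaFactor

/-- The theta-function factor of the summation formula, written symmetrically in all the
variables `X`. -/
noncomputable def thetaFactor {m : ℕ} (q : ℂ) (b X : Fin m → ℂ) : ℂ :=
  (∏ i, ∏ j ∈ Ioi i, thetaSub q (X i) (X j)) / ∏ i, ∏ j, th q (b j * X i)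

variable {m : ℕ} {q : ℂ} {a b X : Fin m → ℂ}

lemma prod_thetaSub_update (hq : ‖q‖ < 1) (hq0 : q ≠ 0) (hX : ∀ i, X i ≠ 0) (l : Fin m) :
    ∏ i, ∏ j ∈ Ioi i,
        thetaSub q (Function.update X l (q * X l) i) (Function.update X l (q * X l) j) =
      (∏ i, ∏ j ∈ Ioi i, thetaSub q (X i) (X j)) * ∏ i ∈ univ.erase l, -(X i / X l) :=
  prod_prod_Ioi_update (thetaSub q) X l _ _
    (fun j _ => thetaSub_mul_left hq hq0 (hX l) (hX j))
    (fun i _ => thetaSub_mul_right hq hq0 (hX i) (hX l))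

lemma prod_th_update (hq : ‖q‖ < 1) (hq0 : q ≠ 0) (hb : ∀ j, b j ≠ 0) (hX : ∀ i, X i ≠ 0)
    (l : Fin m) :
    ∏ i, ∏ j, th q (b j * Function.update X l (q * X l) i) =
      (∏ i, ∏ j, th q (b j * X i)) * ∏ j, -(b j * X l)⁻¹ := by
  have herase : ∏ i ∈ univ.erase l, ∏ j, th q (b j * Function.update X l (q * X l) i) =
      ∏ i ∈ univ.erase l, ∏ j, th q (b j * X i) :=
    prod_congr rfl fun i hi => by rw [Function.update_of_ne (ne_of_mem_erase hi)]
  have hshift : ∏ j, th q (b j * (q * X l)) = (∏ j, -(b j * X l)⁻¹) * ∏ j, th q (b j * X l) := by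
    rw [← prod_mul_distrib]
    refine prod_congr rfl fun j _ => ?_
    rw [mul_left_comm, th_mul_left hq hq0 (mul_ne_zero (hb j) (hX l))]
  rw [← mul_prod_erase univ _ (mem_univ l), herase, Function.update_self, hshift, mul_assoc,
    mul_prod_erase univ (fun i => ∏ j, th q (b j * X i)) (mem_univ l), mul_comm]

lemma thetaFactor_update (hq : ‖q‖ < 1) (hq0 : q ≠ 0) (hb : ∀ j, b j ≠ 0) (hX : ∀ i, X i ≠ 0)
    (l : Fin m) :
    thetaFactor q b (Function.update X l (q * X l)) =
      -((∏ j, b j) * ∏ i, X i) * thetaFactor q b X := by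
  have hmultiplier : (∏ i ∈ univ.erase l, -(X i / X l)) / ∏ j, -(b j * X l)⁻¹ =
      -((∏ j, b j) * ∏ i, X i) := by
    have hl := hX l
    simp only [div_eq_mul_inv (Finset.prod _ _), ← prod_inv_distrib, ← prod_mul_distrib]
    rw [← mul_prod_erase univ (fun j => (-(b j * X l)⁻¹)⁻¹) (mem_univ l),
      ← mul_prod_erase univ (fun i => b i * X i) (mem_univ l), mul_left_comm, ← prod_mul_distrib,
      ← neg_mul]
    congr 1
    · simp [inv_neg]
    · refine prod_congr rfl fun i _ => ?_
      field_simp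
  rw [thetaFactor, prod_thetaSub_update hq hq0 hX, prod_th_update hq hq0 hb hX, mul_div_mul_comm,
    hmultiplier, mul_comm, thetaFactor]

lemma thetaFactor_mul_pow (hq : ‖q‖ < 1) (hq0 : q ≠ 0) (ha : ∀ i, a i ≠ 0) (hb : ∀ j, b j ≠ 0)
    (l : Fin m → ℕ) :
    thetaFactor q b (fun i => a i * q ^ l i) =
      (∏ k ∈ range (∑ i, l i), -((∏ j, b j) * (∏ i, a i) * q ^ k)) * thetaFactor q b a := by
  induction hN : ∑ i, l i generalizing l with
  | zero =>
    have hl : ∀ i, l i = 0 := by simpa using hN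
    simp [hl]
  | succ N ih =>
    obtain ⟨s, -, hs⟩ : ∃ s ∈ univ, l s ≠ 0 := exists_ne_zero_of_sum_ne_zero (by simp [hN])
    have hle : Pi.single s 1 ≤ l :=
      update_le_iff.2 ⟨Nat.one_le_iff_ne_zero.2 hs, fun _ _ => Nat.zero_le _⟩
    obtain ⟨l', rfl⟩ := exists_add_of_le hle
    have hN' : ∑ i, l' i = N := by simpa [sum_add_distrib, add_comm 1] using hN
    have hprod : ∏ i, a i * q ^ l' i = (∏ i, a i) * q ^ N := by
      rw [prod_mul_distrib, prod_pow_eq_pow_sum, hN']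
    rw [add_comm, funext (mul_pow_add_single a q l' s),
      thetaFactor_update hq hq0 hb fun i => mul_ne_zero (ha i) (pow_ne_zero _ hq0), hprod,
      ih l' hN', prod_range_succ]
    ring

end ThetaFactor

section TerminatingEvaluation

variable {q : ℂ}

lemma prod_qp_mul_prod_sub (hq : ‖q‖ < 1) {m : ℕ} {a : Fin m → ℂ} (ha : ∀ i, a i ≠ 0) :
    (∏ i, ∏ j, qp q (q * a⁻¹ j * a i)) * ∏ i, ∏ j ∈ Ioi i, (a j - a i) =
      qp q q ^ m * ∏ i, ∏ j ∈ Ioi i, thetaSub q (a i) (a j) := by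
  have hoffDiag := prod_prod_Ioi_mul_eq_prod_prod_off_diag fun i j => qp q (q * a j / a i)
  have hdiag : ∏ i, ∏ j, qp q (q * a⁻¹ j * a i) =
      qp q q ^ m * ∏ i, ∏ j ∈ Ioi i, qp q (q * a i / a j) * qp q (q * a j / a i) := by
    rw [hoffDiag, ← Fin.prod_const, ← prod_mul_distrib]
    refine prod_congr rfl fun i _ => ?_
    rw [← mul_prod_erase univ _ (mem_univ i), compl_singleton, Pi.inv_apply,
      inv_mul_cancel_right₀ (ha i)]
    congr! 3 with j
    rw [Pi.inv_apply]
    ring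
  rw [hdiag, mul_assoc]
  simp only [thetaSub_eq_sub_mul hq _ (ha _), prod_mul_distrib]
  ring

lemma jacksonTerm_self (hq : ‖q‖ < 1) (hq0 : q ≠ 0) {m : ℕ} {a b : Fin m → ℂ} (ha : ∀ i, a i ≠ 0)
    (hab : ∀ i j (k : ℤ), b j * a i ≠ q ^ k) :
    jacksonTerm q a⁻¹ b a =
      qp q q ^ m * (∏ i, ∏ j, qp q (q * a⁻¹ i / b j)) * thetaFactor q b a := by
  have hth : ∏ i, ∏ j, th q (b j * a i) =
      (∏ i, ∏ j, qp q (b j * a i)) * ∏ i, ∏ j, qp q (q * a⁻¹ i / b j) := by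
    simp only [← prod_mul_distrib]
    refine prod_congr rfl fun i _ => prod_congr rfl fun j _ => ?_
    rw [th, Pi.inv_apply, ← div_eq_mul_inv, div_div, mul_comm (a i)]
  have hth0 : ∏ i, ∏ j, th q (b j * a i) ≠ 0 :=
    prod_ne_zero_iff.2 fun i _ => prod_ne_zero_iff.2 fun j _ => th_ne_zero hq hq0 (hab i j)
  have hnum := prod_qp_mul_prod_sub hq ha
  rw [hth] at hth0
  simp only [jacksonTerm, jacksonWeight, thetaFactor, prod_div_distrib]
  rw [hth, div_mul_eq_mul_div, hnum, mul_div_assoc', mul_right_comm,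
    mul_div_mul_right _ _ (right_ne_zero_of_mul hth0)]

lemma qp_div_mul_prod_neg (hq : ‖q‖ < 1) (hq0 : q ≠ 0) {c : ℂ} (hc : c ≠ 0) (N : ℕ) :
    qp q (q / (c * q ^ N)) * ∏ k ∈ range N, -(c * q ^ k) =
      (∏ k ∈ range N, (1 - c * q ^ k)) * qp q (q / c) := by
  induction N with
  | zero => simp
  | succ N ih =>
    have hstep : qp q (q / (c * q ^ (N + 1))) =
        (1 - (c * q ^ N)⁻¹) * qp q (q / (c * q ^ N)) := by
      rw [qp_eq_one_sub_mul hq, pow_succ]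
      congr 3 <;> field_simp
    have hfactor : (1 - (c * q ^ N)⁻¹) * -(c * q ^ N) = 1 - c * q ^ N := by
      field_simp
      ring
    rw [hstep, prod_range_succ, prod_range_succ, mul_right_comm _ (1 - c * q ^ N), ← ih,
      ← hfactor]
    ring

/-- The value of the sum of `jacksonTerm q α b` over a lattice through `X`, that is, the right-hand
side of the summation formula up to the factor `(1 - q)ⁿ`; the parameter `d` is `∏ᵢ Xᵢ`. -/
noncomputable def gustafsonValue {n : ℕ} (q : ℂ) (α b X : Fin (n + 1) → ℂ) : ℂ :=
  qp q q ^ n * (qp q (q * (∏ j, α j) * ∏ i, X i) * qp q (q / ((∏ j, b j) * ∏ i, X i)) /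
    qp q (q * (∏ j, α j) / ∏ j, b j)) * (∏ i, ∏ j, qp q (q * α i / b j)) * thetaFactor q b X

lemma simplexSum_eq_gustafsonValue {n : ℕ} (hq : ‖q‖ < 1) (hq0 : q ≠ 0) {a b : Fin (n + 1) → ℂ}
    (ha : ∀ i, a i ≠ 0) (hb : ∀ i, b i ≠ 0) (hab : ∀ i j (k : ℤ), b j * a i ≠ q ^ k)
    (hbal : ‖q * (∏ j, a⁻¹ j) / ∏ j, b j‖ < 1) (l : Fin (n + 1) → ℕ) :
    simplexSum q a b (∑ i, l i) = gustafsonValue q a⁻¹ b fun i => a i * q ^ l i := by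
  set N := ∑ i, l i with hN
  have hA : ∏ i, a i ≠ 0 := prod_ne_zero_iff.2 fun i _ => ha i
  have hB : ∏ j, b j ≠ 0 := prod_ne_zero_iff.2 fun j _ => hb j
  have hinv : ∏ j, a⁻¹ j = (∏ i, a i)⁻¹ := by simp
  have hX : ∏ i, a i * q ^ l i = (∏ i, a i) * q ^ N := by
    rw [prod_mul_distrib, prod_pow_eq_pow_sum]
  have hqN : ∏ k ∈ range N, (1 - q ^ (k + 1)) ≠ 0 := prod_ne_zero_iff.2 fun k _ =>
    sub_ne_zero.2 fun h => (pow_lt_one₀ (norm_nonneg q) hq k.succ_ne_zero).ne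
      (by rw [← norm_pow, ← h, norm_one])
  have hsum := prod_mul_simplexSum hq ha (b := b) (fun i j k h => hab i j (-k) (by
    rw [zpow_neg, zpow_natCast]
    exact eq_inv_of_mul_eq_one_left (by rw [mul_assoc]; exact h))) N
  have hqq : (∏ k ∈ range N, (1 - q ^ (k + 1))) * qp q (q ^ N * q) = qp q q := by
    simp only [pow_succ]
    exact (qp_eq_prod_range_mul hq q N).symm
  have hreflect := qp_div_mul_prod_neg hq hq0 (mul_ne_zero hB hA) N
  have hden : qp q (q / ((∏ j, b j) * ∏ i, a i)) ≠ 0 :=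
    qp_ne_zero_of_norm_lt_one hq (by rwa [hinv, ← div_eq_mul_inv, div_div, mul_comm] at hbal)
  refine mul_left_cancel₀ hqN (hsum.trans ?_)
  have hqX : q * (∏ i, a i)⁻¹ * ((∏ i, a i) * q ^ N) = q ^ N * q := by field_simp
  have hqAB : q * (∏ i, a i)⁻¹ / ∏ j, b j = q / ((∏ j, b j) * ∏ i, a i) := by field_simp
  rw [jacksonTerm_self hq hq0 ha hab, gustafsonValue, thetaFactor_mul_pow hq hq0 ha hb, hX, hinv,
    hqX, hqAB, ← mul_assoc (∏ j, b j) (∏ i, a i)]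
  simp only [← mul_assoc (∏ j, b j) (∏ i, a i), eq_div_of_mul_eq hden hreflect.symm]
  rw [pow_succ]
  nth_rewrite 2 [← hqq]
  ring

end TerminatingEvaluation

section Lattice

/-- The integer vector with first entries `ν` and entries summing to zero: the exponents of `q` in
all `n + 1` variables of the Jackson integral, whose product is constant. -/
def zeroSumSnoc {n : ℕ} (ν : Fin n → ℤ) : Fin (n + 1) → ℤ := Fin.snoc ν (-∑ k, ν k)

/-- The lattice of points `Xᵢ q^{μᵢ}` with `∑ᵢ μᵢ = 0`, parametrized by the first entries of `μ`. -/
noncomputable def latticePoint {n : ℕ} (q : ℂ) (X : Fin (n + 1) → ℂ) (ν : Fin n → ℤ) :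
    Fin (n + 1) → ℂ :=
  fun i => X i * q ^ zeroSumSnoc ν i

variable {n : ℕ} {q : ℂ}

lemma sum_zeroSumSnoc (ν : Fin n → ℤ) : ∑ i, zeroSumSnoc ν i = 0 := by
  simp [zeroSumSnoc, Fin.sum_univ_castSucc]

lemma zeroSumSnoc_init {μ : Fin (n + 1) → ℤ} (hμ : ∑ i, μ i = 0) :
    zeroSumSnoc (Fin.init μ) = μ := by
  rw [Fin.sum_univ_castSucc, add_eq_zero_iff_neg_eq] at hμ
  simp only [zeroSumSnoc, Fin.init]
  rw [hμ]
  exact Fin.snoc_init_self μ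

lemma init_zeroSumSnoc (ν : Fin n → ℤ) : Fin.init (zeroSumSnoc ν) = ν := Fin.init_snoc _ _

lemma nonneg_of_jacksonTerm_ne_zero (hq0 : q ≠ 0) {b X : Fin (n + 1) → ℂ} (hX : ∀ i, X i ≠ 0)
    {N : Fin (n + 1) → ℕ} {ν : Fin n → ℤ}
    (h : jacksonTerm q (fun j => q ^ N j / X j) b (latticePoint q X ν) ≠ 0) (i : Fin (n + 1)) :
    0 ≤ zeroSumSnoc ν i + N i := by
  by_contra! hneg
  refine h (mul_eq_zero_of_left (prod_eq_zero (mem_univ i) (prod_eq_zero (mem_univ i) ?_)) _)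
  rw [qp_eq_zero_of_pow_mul_eq_one (k := (-(1 + N i + zeroSumSnoc ν i)).toNat), zero_div]
  rw [← zpow_natCast, Int.toNat_of_nonneg (by lia), zpow_neg, zpow_add₀ hq0, zpow_add₀ hq0,
    latticePoint, zpow_one, zpow_natCast]
  have := zpow_ne_zero (zeroSumSnoc ν i) hq0
  have := hX i
  field_simp

/-- At `αⱼ = q^{Nⱼ}/Xⱼ` the factors `(q αᵢ zᵢ)_∞` vanish for `μᵢ < -Nᵢ`, and `l = μ + N` runs over a
simplex. -/
lemma tsum_jacksonTerm_eq_simplexSum (hq0 : q ≠ 0) (b : Fin (n + 1) → ℂ) {X : Fin (n + 1) → ℂ}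
    (hX : ∀ i, X i ≠ 0) (N : Fin (n + 1) → ℕ) :
    ∑' ν, jacksonTerm q (fun j => q ^ N j / X j) b (latticePoint q X ν) =
      simplexSum q (fun i => X i / q ^ N i) b (∑ i, N i) := by
  set e : (Fin (n + 1) → ℕ) → Fin n → ℤ := fun l => Fin.init fun i => (l i : ℤ) - N i with he
  have zeroSumSnoc_e {l} (hl : l ∈ piAntidiag univ (∑ i, N i)) :
      zeroSumSnoc (e l) = fun i => (l i : ℤ) - N i := by
    refine zeroSumSnoc_init ?_
    rw [sum_sub_distrib, ← Nat.cast_sum, (mem_piAntidiag.1 hl).1, Nat.cast_sum, sub_self]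
  have e_injOn : Set.InjOn e (piAntidiag univ (∑ i, N i) : Finset (Fin (n + 1) → ℕ)) := by
    intro l hl l' hl' hll'
    have h := (zeroSumSnoc_e hl).symm.trans (hll' ▸ zeroSumSnoc_e hl')
    funext i
    simpa using congrFun h i
  rw [tsum_eq_sum (s := (piAntidiag univ (∑ i, N i)).image e), sum_image e_injOn, simplexSum]
  · refine sum_congr rfl fun l hl => ?_
    congr 1
    · funext j
      simp
    · funext i
      rw [latticePoint, zeroSumSnoc_e hl, zpow_sub₀ hq0, zpow_natCast, zpow_natCast]
      ring
  · intro ν hν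
    by_contra hne
    have hnonneg := nonneg_of_jacksonTerm_ne_zero hq0 hX hne
    lift (fun i => zeroSumSnoc ν i + N i) to Fin (n + 1) → ℕ using hnonneg with l hl
    refine hν (mem_image.2 ⟨l, mem_piAntidiag.2 ⟨?_, by simp⟩, ?_⟩)
    · have hsum : ∑ i, (l i : ℤ) = ∑ i, (N i : ℤ) := by
        simp [congrFun hl _, sum_add_distrib, sum_zeroSumSnoc]
      exact_mod_cast hsum
    · simp only [he, congrFun hl _, add_sub_cancel_right]
      exact init_zeroSumSnoc ν

lemma tsum_jacksonTerm_eq_gustafsonValue_of_pow (hq : ‖q‖ < 1) (hq0 : q ≠ 0)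
    {b X : Fin (n + 1) → ℂ} (hb : ∀ j, b j ≠ 0) (hX : ∀ i, X i ≠ 0)
    (hbX : ∀ i j (k : ℤ), b j * X i ≠ q ^ k) {N : Fin (n + 1) → ℕ}
    (hbal : ‖q * (∏ j, q ^ N j / X j) / ∏ j, b j‖ < 1) :
    ∑' ν, jacksonTerm q (fun j => q ^ N j / X j) b (latticePoint q X ν) =
      gustafsonValue q (fun j => q ^ N j / X j) b X := by
  have hqN (i) : q ^ N i ≠ 0 := pow_ne_zero _ hq0
  have hinv : (fun i => X i / q ^ N i)⁻¹ = fun j => q ^ N j / X j := by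
    funext j
    simp
  have hshift (i j) (k : ℤ) : b j * (X i / q ^ N i) ≠ q ^ k := fun h => hbX i j (k + N i) (by
    rw [zpow_add₀ hq0, ← h, zpow_natCast, mul_assoc, div_mul_cancel₀ _ (hqN i)])
  rw [tsum_jacksonTerm_eq_simplexSum hq0 b hX, simplexSum_eq_gustafsonValue hq hq0
    (fun i => div_ne_zero (hX i) (hqN i)) hb hshift (by rwa [hinv]) N, hinv]
  simp only [div_mul_cancel₀ _ (hqN _)]

end Lattice

section Majorant

variable {q : ℂ}

lemma exists_norm_jacksonWeight_le {ι : Type*} [Fintype ι] (hq : ‖q‖ < 1) (hq0 : q ≠ 0) {b : ι → ℂ}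
    (hb : ∀ j, b j ≠ 0) {x : ℂ} (hx : x ≠ 0) (hbx : ∀ j (k : ℤ), b j * x ≠ q ^ k) {ρ : ι → ℝ}
    (hρ : ∀ j, 0 < ρ j) :
    ∃ C : ℝ, 0 < C ∧ ∀ α : ι → ℂ, (∀ j, ‖α j‖ ≤ ρ j) → ∀ ν : ℤ,
      ‖jacksonWeight q α b (x * q ^ ν)‖ ≤ C * (∏ j, ‖q‖ * ρ j / ‖b j‖) ^ (-ν).toNat := by
  have hq_pos : 0 < ‖q‖ := norm_pos_iff.2 hq0
  have hx_pos : 0 < ‖x‖ := norm_pos_iff.2 hx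
  choose C hC0 hC using fun j => exists_norm_qp_div_qp_le hq hq0 (mul_ne_zero (hb j) hx) (hbx j)
    (c := ‖q‖ * ρ j * ‖x‖) (mul_pos (mul_pos hq_pos (hρ j)) hx_pos)
  refine ⟨∏ j, C j, prod_pos fun j _ => hC0 j, fun α hα ν => ?_⟩
  rw [jacksonWeight, norm_prod, ← prod_pow, ← prod_mul_distrib]
  refine prod_le_prod (fun _ _ => norm_nonneg _) fun j _ => ?_
  have hw : ‖q * α j * x‖ ≤ ‖q‖ * ρ j * ‖x‖ := by
    rw [norm_mul, norm_mul]
    gcongr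
    exact hα j
  have hbound := hC j _ hw ν
  rwa [norm_mul (b j), mul_div_mul_right _ _ hx_pos.ne', mul_assoc _ x, mul_assoc _ x] at hbound

lemma norm_mul_zpow_pow_le (hq : ‖q‖ < 1) (hq0 : q ≠ 0) (x : ℂ) {k n : ℕ} (hk : k ≤ n) (ν : ℤ) :
    ‖x * q ^ ν‖ ^ k ≤ max 1 ‖x‖ ^ n * ((‖q‖ ^ n)⁻¹) ^ (-ν).toNat := by
  have hq_inv : 1 ≤ ‖q‖⁻¹ := (one_le_inv₀ (norm_pos_iff.2 hq0)).2 hq.le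
  have hzpow : ‖q‖ ^ ν ≤ ‖q‖⁻¹ ^ (-ν).toNat := by
    rw [← zpow_natCast, inv_zpow']
    exact zpow_le_zpow_right_of_le_one₀ (norm_pos_iff.2 hq0) hq.le (by omega)
  calc ‖x * q ^ ν‖ ^ k ≤ (max 1 ‖x‖ * ‖q‖⁻¹ ^ (-ν).toNat) ^ k := by
        rw [norm_mul, norm_zpow]
        gcongr
        exact le_max_right _ _
    _ ≤ (max 1 ‖x‖ * ‖q‖⁻¹ ^ (-ν).toNat) ^ n :=
        pow_le_pow_right₀ (one_le_mul_of_one_le_of_one_le (le_max_left _ _) (one_le_pow₀ hq_inv)) hk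
    _ = max 1 ‖x‖ ^ n * ((‖q‖ ^ n)⁻¹) ^ (-ν).toNat := by
        rw [mul_pow, ← inv_pow, ← pow_mul, ← pow_mul, mul_comm n]

variable {n : ℕ} {b X : Fin (n + 1) → ℂ}

/-- The weight alone is `O((‖q‖ⁿ r)^{-ν})` as `ν → -∞`, where `r` is the base on the right-hand
side; the factor `‖q‖ⁿ` absorbs the power of the variable. -/
lemma exists_norm_jacksonWeight_mul_pow_le (hq : ‖q‖ < 1) (hq0 : q ≠ 0) (hb : ∀ j, b j ≠ 0) {x : ℂ}
    (hx : x ≠ 0) (hbx : ∀ j (k : ℤ), b j * x ≠ q ^ k) {ρ : Fin (n + 1) → ℝ} (hρ : ∀ j, 0 < ρ j) :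
    ∃ C : ℝ, 0 < C ∧ ∀ α : Fin (n + 1) → ℂ, (∀ j, ‖α j‖ ≤ ρ j) → ∀ k ≤ n, ∀ ν : ℤ,
      ‖jacksonWeight q α b (x * q ^ ν)‖ * ‖x * q ^ ν‖ ^ k ≤
        C * (‖q‖ * (∏ j, ρ j) / ‖∏ j, b j‖) ^ (-ν).toNat := by
  obtain ⟨C, hC0, hC⟩ := exists_norm_jacksonWeight_le hq hq0 hb hx hbx hρ
  have hbase : (∏ j, ‖q‖ * ρ j / ‖b j‖) * (‖q‖ ^ n)⁻¹ = ‖q‖ * (∏ j, ρ j) / ‖∏ j, b j‖ := by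
    rw [prod_div_distrib, prod_mul_distrib, norm_prod, Fin.prod_const, pow_succ]
    field_simp
  have hbase_nonneg : 0 ≤ ∏ j, ‖q‖ * ρ j / ‖b j‖ := prod_nonneg fun j _ => by
    have := hρ j
    positivity
  refine ⟨C * max 1 ‖x‖ ^ n, by positivity, fun α hα k hk ν => ?_⟩
  calc ‖jacksonWeight q α b (x * q ^ ν)‖ * ‖x * q ^ ν‖ ^ k
      ≤ (C * (∏ j, ‖q‖ * ρ j / ‖b j‖) ^ (-ν).toNat) *
          (max 1 ‖x‖ ^ n * ((‖q‖ ^ n)⁻¹) ^ (-ν).toNat) :=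
        mul_le_mul (hC α hα ν) (norm_mul_zpow_pow_le hq hq0 x hk ν) (by positivity) (by positivity)
    _ = _ := by rw [mul_mul_mul_comm, ← mul_pow, hbase]

/-- Since `∑ᵢ μᵢ = 0`, the sum of the negative parts of the `μᵢ` is half of `∑ᵢ |μᵢ|`: decay as the
variables tend to infinity suffices for summability. -/
lemma pow_sum_toNat_neg_zeroSumSnoc_le {s : ℝ} (hs0 : 0 ≤ s) (hs1 : s ≤ 1) (ν : Fin n → ℤ) :
    (s ^ 2) ^ ∑ i, (-zeroSumSnoc ν i).toNat ≤ ∏ k, s ^ (ν k).natAbs := by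
  rw [← pow_mul, ← sum_natAbs_eq_two_mul_sum_toNat_neg (sum_zeroSumSnoc ν), prod_pow_eq_pow_sum]
  refine pow_le_pow_of_le_one hs0 hs1 ?_
  simp [zeroSumSnoc, Fin.sum_univ_castSucc]

lemma exists_summable_norm_jacksonTerm_le (hq : ‖q‖ < 1) (hq0 : q ≠ 0) (hb : ∀ j, b j ≠ 0)
    (hX : ∀ i, X i ≠ 0) (hbX : ∀ i j (k : ℤ), b j * X i ≠ q ^ k) {ρ : Fin (n + 1) → ℝ}
    (hρ : ∀ j, 0 < ρ j) (hbal : ‖q‖ * (∏ j, ρ j) / ‖∏ j, b j‖ < 1) :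
    ∃ v : (Fin n → ℤ) → ℝ, Summable v ∧ ∀ α : Fin (n + 1) → ℂ, (∀ j, ‖α j‖ ≤ ρ j) →
      ∀ ν, ‖jacksonTerm q α b (latticePoint q X ν)‖ ≤ v ν := by
  choose C hC0 hC using fun i => exists_norm_jacksonWeight_mul_pow_le hq hq0 hb (hX i) (hbX i) hρ
  set r := ‖q‖ * (∏ j, ρ j) / ‖∏ j, b j‖
  have hr0 : 0 ≤ r := div_nonneg (mul_nonneg (norm_nonneg _) (prod_nonneg fun j _ => (hρ j).le))
    (norm_nonneg _)
  have hs1 : √r < 1 := by rwa [Real.sqrt_lt' one_pos, one_pow]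
  have hC_nonneg : 0 ≤ ∏ i, C i := prod_nonneg fun i _ => (hC0 i).le
  refine ⟨fun ν => ∑ _σ : Equiv.Perm (Fin (n + 1)), (∏ i, C i) * ∏ k, √r ^ (ν k).natAbs,
    summable_sum fun _ _ => (summable_prod_fin (summable_pow_natAbs (Real.sqrt_nonneg r) hs1)
      (fun _ => by positivity) n).mul_left _, fun α hα ν => ?_⟩
  rw [jacksonTerm, norm_mul, norm_prod]
  refine (mul_le_mul_of_nonneg_left (norm_vandermonde_le _)
    (prod_nonneg fun _ _ => norm_nonneg _)).trans ?_
  rw [mul_sum]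
  refine sum_le_sum fun σ _ => ?_
  calc _ ≤ ∏ i, C i * r ^ (-zeroSumSnoc ν i).toNat := by
        rw [← prod_mul_distrib]
        exact prod_le_prod (fun _ _ => by positivity) fun i _ => hC i α hα _ (σ i).is_le _
    _ = (∏ i, C i) * (√r ^ 2) ^ ∑ i, (-zeroSumSnoc ν i).toNat := by
        rw [prod_mul_distrib, prod_pow_eq_pow_sum, Real.sq_sqrt hr0]
    _ ≤ _ := mul_le_mul_of_nonneg_left
        (pow_sum_toNat_neg_zeroSumSnoc_le (Real.sqrt_nonneg r) hs1.le ν) hC_nonneg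

end Majorant

section Continuation

lemma differentiable_update_apply {ι : Type*} [DecidableEq ι] (α : ι → ℂ) (j k : ι) :
    Differentiable ℂ fun w => Function.update α j w k := by
  rcases eq_or_ne k j with rfl | hkj
  · simp
  · simp [hkj]

/-- The domain of absolute convergence of the Jackson integral in the parameters `αⱼ = aⱼ⁻¹`, in
which, unlike for `a`, the value `αⱼ = 0` is allowed. -/
def balancedRegion {ι : Type*} [Fintype ι] (q : ℂ) (b : ι → ℂ) : Set (ι → ℂ) :=
  {α | ‖q * (∏ j, α j) / ∏ j, b j‖ < 1}

section Region

variable {ι : Type*} [Fintype ι] (q : ℂ) (b : ι → ℂ)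

lemma isOpen_balancedRegion : IsOpen (balancedRegion q b) :=
  isOpen_lt (by fun_prop) continuous_const

variable [DecidableEq ι] (α : ι → ℂ) (j : ι)

lemma isPreconnected_balancedRegion_update :
    IsPreconnected {w | Function.update α j w ∈ balancedRegion q b} := by
  have hslice : {w | Function.update α j w ∈ balancedRegion q b} =
      LinearMap.mulRight ℝ (q * (∏ k ∈ univ \ {j}, α k) / ∏ k, b k) ⁻¹' Metric.ball 0 1 := by
    ext w
    simp only [balancedRegion, Set.mem_ofPred_eq, prod_update_of_mem (mem_univ j), Set.mem_preimage,
      LinearMap.mulRight_apply, mem_ball_zero_iff]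
    ring_nf
  rw [hslice]
  exact ((convex_ball 0 1).linear_preimage _).isPreconnected

lemma update_zero_mem_balancedRegion : Function.update α j 0 ∈ balancedRegion q b := by
  have hprod : ∏ k, Function.update α j 0 k = 0 := prod_eq_zero (mem_univ j) (by simp)
  simp [balancedRegion, hprod, -norm_prod]

end Region

variable {n : ℕ} {q : ℂ} {α b X : Fin (n + 1) → ℂ}

lemma exists_summable_eventually_norm_jacksonTerm_le (hq : ‖q‖ < 1) (hq0 : q ≠ 0)
    (hb : ∀ j, b j ≠ 0) (hX : ∀ i, X i ≠ 0) (hbX : ∀ i j (k : ℤ), b j * X i ≠ q ^ k)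
    (hα : α ∈ balancedRegion q b) :
    ∃ v : (Fin n → ℤ) → ℝ, Summable v ∧
      ∀ᶠ α' in 𝓝 α, ∀ ν, ‖jacksonTerm q α' b (latticePoint q X ν)‖ ≤ v ν := by
  have hcont : Continuous fun ε : ℝ => ‖q‖ * (∏ j, (‖α j‖ + ε)) / ‖∏ j, b j‖ := by fun_prop
  have hlt : ‖q‖ * (∏ j, (‖α j‖ + 0)) / ‖∏ j, b j‖ < 1 := by
    simpa [balancedRegion] using hα
  obtain ⟨ε, hε, hε0⟩ := (((hcont.tendsto 0).eventually_lt_const hlt).filter_mono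
    nhdsWithin_le_nhds |>.and (self_mem_nhdsWithin : Set.Ioi 0 ∈ 𝓝[>] (0 : ℝ))).exists
  have hε0 : 0 < ε := hε0
  obtain ⟨v, hv, hle⟩ := exists_summable_norm_jacksonTerm_le hq hq0 hb hX hbX
    (fun j => by positivity) hε
  refine ⟨v, hv, (eventually_all.2 fun j => ?_).mono hle⟩
  exact ((continuous_apply j).norm.tendsto α).eventually_le_const (by simpa using hε0)

lemma summable_jacksonTerm (hq : ‖q‖ < 1) (hq0 : q ≠ 0) (hb : ∀ j, b j ≠ 0) (hX : ∀ i, X i ≠ 0)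
    (hbX : ∀ i j (k : ℤ), b j * X i ≠ q ^ k) (hα : α ∈ balancedRegion q b) :
    Summable fun ν => jacksonTerm q α b (latticePoint q X ν) :=
  let ⟨_, hv, hle⟩ := exists_summable_eventually_norm_jacksonTerm_le hq hq0 hb hX hbX hα
  hv.of_norm_bounded hle.self_of_nhds

lemma differentiable_jacksonTerm_update (hq : ‖q‖ < 1) (α b z : Fin (n + 1) → ℂ) (j : Fin (n + 1)) :
    Differentiable ℂ fun w => jacksonTerm q (Function.update α j w) b z := by
  have hqp := differentiable_qp hq
  have hupdate (k) := differentiable_update_apply α j k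
  unfold jacksonTerm jacksonWeight
  fun_prop

lemma differentiableAt_tsum_jacksonTerm_update (hq : ‖q‖ < 1) (hq0 : q ≠ 0) (hb : ∀ j, b j ≠ 0)
    (hX : ∀ i, X i ≠ 0) (hbX : ∀ i j (k : ℤ), b j * X i ≠ q ^ k) (hα : α ∈ balancedRegion q b)
    (j : Fin (n + 1)) :
    DifferentiableAt ℂ
      (fun w => ∑' ν, jacksonTerm q (Function.update α j w) b (latticePoint q X ν)) (α j) := by
  obtain ⟨v, hv, hle⟩ := exists_summable_eventually_norm_jacksonTerm_le hq hq0 hb hX hbX hα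
  have hupdate : Tendsto (Function.update α j) (𝓝 (α j)) (𝓝 α) := by
    simpa using ((continuous_const (y := α)).update j continuous_id).tendsto (α j)
  exact differentiableAt_tsum_of_eventually_norm_le hv
    (fun ν => differentiable_jacksonTerm_update hq α b _ j) (hupdate.eventually hle)

lemma differentiableAt_gustafsonValue_update (hq : ‖q‖ < 1) (X : Fin (n + 1) → ℂ)
    (hα : α ∈ balancedRegion q b) (j : Fin (n + 1)) :
    DifferentiableAt ℂ (fun w => gustafsonValue q (Function.update α j w) b X) (α j) := by
  have hqp := differentiable_qp hq
  have hupdate (k) := differentiable_update_apply α j k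
  have hden : qp q (q * (∏ k, Function.update α j (α j) k) / ∏ k, b k) ≠ 0 :=
    qp_ne_zero_of_norm_lt_one hq (by simpa [balancedRegion] using hα)
  unfold gustafsonValue
  fun_prop (disch := exact hden)

lemma frequently_mem_range_pow_div (hq : ‖q‖ < 1) (hq0 : q ≠ 0) {x : ℂ} (hx : x ≠ 0) :
    ∃ᶠ w in 𝓝[≠] 0, w ∈ Set.range fun N : ℕ => q ^ N / x := by
  have hlim : Tendsto (fun N : ℕ => q ^ N / x) atTop (𝓝[≠] 0) := by
    refine tendsto_nhdsWithin_iff.2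
      ⟨?_, Eventually.of_forall fun N => div_ne_zero (pow_ne_zero N hq0) hx⟩
    simpa using (tendsto_pow_atTop_nhds_zero_of_norm_lt_one hq).div_const x
  exact hlim.frequently (Frequently.of_forall Set.mem_range_self)

theorem tsum_jacksonTerm_eq_gustafsonValue (hq : ‖q‖ < 1) (hq0 : q ≠ 0) (hb : ∀ j, b j ≠ 0)
    (hX : ∀ i, X i ≠ 0) (hbX : ∀ i j (k : ℤ), b j * X i ≠ q ^ k) (hα : α ∈ balancedRegion q b) :
    ∑' ν, jacksonTerm q α b (latticePoint q X ν) = gustafsonValue q α b X := by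
  refine eqOn_of_separately_differentiable
    (F := fun α => ∑' ν, jacksonTerm q α b (latticePoint q X ν))
    (G := fun α => gustafsonValue q α b X) (T := fun j => Set.range fun N : ℕ => q ^ N / X j)
    (isOpen_balancedRegion q b) (fun α _ => isPreconnected_balancedRegion_update q b α)
    (fun α _ => update_zero_mem_balancedRegion q b α)
    (fun j => frequently_mem_range_pow_div hq hq0 (hX j))
    (fun α hα => differentiableAt_tsum_jacksonTerm_update hq hq0 hb hX hbX hα)
    (fun α hα => differentiableAt_gustafsonValue_update hq X hα) (fun α hα hαT => ?_) hα
  choose N hN using hαT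
  obtain rfl : (fun j => q ^ N j / X j) = α := funext hN
  exact tsum_jacksonTerm_eq_gustafsonValue_of_pow hq hq0 hb hX hbX hα

end Continuation

section Gustafson

lemma prod_zpow_eq_zpow_sum {G₀ ι : Type*} [CommGroupWithZero G₀] {g : G₀} (hg : g ≠ 0)
    (s : Finset ι) (f : ι → ℤ) : ∏ i ∈ s, g ^ f i = g ^ ∑ i ∈ s, f i := by
  classical
  induction s using Finset.induction_on with
  | empty => simp
  | insert i s hi ih => rw [prod_insert hi, sum_insert hi, ih, zpow_add₀ hg]

variable {n : ℕ} {q d : ℂ} {a b : Fin (n + 1) → ℂ} {x : Fin n → ℂ}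

lemma gz_eq_latticePoint (hq0 : q ≠ 0) (d : ℂ) (x : Fin n → ℂ) (ν : Fin n → ℤ) :
    gz q d x ν = latticePoint q (Fin.snoc x (d * (∏ k, x k)⁻¹)) ν := by
  funext i
  refine Fin.lastCases ?_ (fun k => ?_) i
  · simp only [gz, latticePoint, zeroSumSnoc, Fin.snoc_last, prod_mul_distrib,
      prod_zpow_eq_zpow_sum hq0, mul_inv, zpow_neg, mul_assoc]
  · simp only [gz, latticePoint, zeroSumSnoc, Fin.snoc_castSucc]

lemma gTerm_eq_jacksonTerm (hq0 : q ≠ 0) (d : ℂ) (a b : Fin (n + 1) → ℂ) (x : Fin n → ℂ)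
    (ν : Fin n → ℤ) :
    gTerm q d a b x ν =
      jacksonTerm q a⁻¹ b (latticePoint q (Fin.snoc x (d * (∏ k, x k)⁻¹)) ν) := by
  rw [gTerm, gz_eq_latticePoint hq0]
  rfl

lemma prod_snoc_mul_inv_prod (d : ℂ) (hx : ∀ i, x i ≠ 0) :
    ∏ i, (Fin.snoc x (d * (∏ k, x k)⁻¹) : Fin (n + 1) → ℂ) i = d := by
  rw [Fin.prod_snoc, mul_comm, inv_mul_cancel_right₀ (prod_ne_zero_iff.2 fun i _ => hx i)]

lemma thetaFactor_snoc (hq : ‖q‖ < 1) (b : Fin (n + 1) → ℂ) (hx : ∀ i, x i ≠ 0) {y : ℂ}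
    (hy : y ≠ 0) :
    thetaFactor q b (Fin.snoc x y : Fin (n + 1) → ℂ) =
      (-1) ^ n * ((∏ i, ∏ j ∈ Ioi i, x j * th q (x i / x j)) /
        ∏ i : Fin n, ∏ j, th q (b j * x i)) *
      ((∏ i, x i * th q (y * (x i)⁻¹)) / ∏ j, th q (b j * y)) := by
  have hswap : ∏ i, thetaSub q (x i) y = (-1) ^ n * ∏ i, x i * th q (y * (x i)⁻¹) := by
    rw [← Fin.prod_const, ← prod_mul_distrib]
    refine prod_congr rfl fun i _ => ?_
    rw [thetaSub_swap hq hy (hx i), neg_one_mul, thetaSub, div_eq_mul_inv]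
  rw [thetaFactor, prod_prod_Ioi_castSucc, Fin.prod_univ_castSucc]
  simp only [Fin.snoc_castSucc, Fin.snoc_last]
  rw [hswap, mul_div_mul_comm, mul_div_assoc]
  simp only [thetaSub]
  ring

lemma inv_mem_balancedRegion (hbal : ‖q‖ < ‖(∏ i, a i) * ∏ i, b i‖) :
    a⁻¹ ∈ balancedRegion q b := by
  have hpos := (norm_nonneg q).trans_lt hbal
  simp only [balancedRegion, Set.mem_ofPred_eq, Pi.inv_apply, prod_inv_distrib]
  rwa [← div_eq_mul_inv, div_div, norm_div, div_lt_one hpos]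

theorem gustafson_An_summation_general (hq0 : q ≠ 0) (hq1 : ‖q‖ < 1) (hd : d ≠ 0)
    (hbal : ‖q‖ < ‖(∏ i, a i) * ∏ i, b i‖) (hx : ∀ i, x i ≠ 0)
    (hxb : ∀ (i : Fin n) (j : Fin (n + 1)), ∀ m : ℤ, x i * b j ≠ q ^ m)
    (hdb : ∀ j : Fin (n + 1), ∀ m : ℤ, d * (∏ k, x k)⁻¹ * b j ≠ q ^ m) :
    Summable (gTerm q d a b x) ∧
      gSum q d a b x =
        (1 - q) ^ n * qp q q ^ n *
            (qp q (q * (∏ j, a j)⁻¹ * d) * qp q (q * (∏ j, b j)⁻¹ * d⁻¹) /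
              qp q (q * (∏ j, a j)⁻¹ * (∏ j, b j)⁻¹)) *
            (∏ i, ∏ j, qp q (q * (a i)⁻¹ * (b j)⁻¹)) * (-1) ^ n *
          ((∏ i, ∏ j ∈ Ioi i, x j * th q (x i / x j)) / ∏ i : Fin n, ∏ j, th q (b j * x i)) *
          ((∏ i, x i * th q (d * (∏ k, x k)⁻¹ * (x i)⁻¹)) /
            ∏ j, th q (b j * d * (∏ k, x k)⁻¹)) := by
  have hb : ∀ j, b j ≠ 0 := fun j => prod_ne_zero_iff.1
    (right_ne_zero_of_mul (norm_pos_iff.1 ((norm_nonneg q).trans_lt hbal))) j (mem_univ j)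
  have hy : d * (∏ k, x k)⁻¹ ≠ 0 :=
    mul_ne_zero hd (inv_ne_zero (prod_ne_zero_iff.2 fun i _ => hx i))
  have hX : ∀ i, (Fin.snoc x (d * (∏ k, x k)⁻¹) : Fin (n + 1) → ℂ) i ≠ 0 := by
    simp only [Fin.forall_fin_succ', Fin.snoc_castSucc, Fin.snoc_last]
    exact ⟨hx, hy⟩
  have hbX : ∀ i j (m : ℤ),
      b j * (Fin.snoc x (d * (∏ k, x k)⁻¹) : Fin (n + 1) → ℂ) i ≠ q ^ m := by
    rw [Fin.forall_fin_succ']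
    simp only [Fin.snoc_castSucc, Fin.snoc_last, mul_comm (b _)]
    exact ⟨hxb, hdb⟩
  have hα := inv_mem_balancedRegion hbal
  have hterm := funext (gTerm_eq_jacksonTerm hq0 d a b x)
  refine ⟨hterm ▸ summable_jacksonTerm hq1 hq0 hb hX hbX hα, ?_⟩
  rw [gSum, hterm, tsum_jacksonTerm_eq_gustafsonValue hq1 hq0 hb hX hbX hα, gustafsonValue,
    prod_snoc_mul_inv_prod d hx, thetaFactor_snoc hq1 b hx hy]
  simp only [Pi.inv_apply, prod_inv_distrib, div_eq_mul_inv, mul_inv, mul_assoc]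

end Gustafson

/-- Gustafson's `A_n` summation formula (Theorem 5.2). -/
theorem gustafson_An_summation
    (q : ℝ) (hq0 : 0 < q) (hq1 : q < 1) (n : ℕ) (hn : 1 ≤ n)
    (a b : Fin (n + 1) → ℂ) (ha : ∀ i, a i ≠ 0) (hb : ∀ i, b i ≠ 0)
    (d : ℂ) (hd : d ≠ 0)
    (hbal : (q : ℝ) < ‖(∏ i, a i) * ∏ i, b i‖)
    (x : Fin n → ℂ) (hx : ∀ i, x i ≠ 0)
    (hxb : ∀ (i : Fin n) (j : Fin (n + 1)), ∀ m : ℤ, x i * b j ≠ (q : ℂ) ^ m)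
    (hdb : ∀ j : Fin (n + 1), ∀ m : ℤ, d * (∏ k, x k)⁻¹ * b j ≠ (q : ℂ) ^ m) :
    Summable (gTerm (q : ℂ) d a b x) ∧
      gSum (q : ℂ) d a b x =
        (1 - (q : ℂ)) ^ n * qp (q : ℂ) (q : ℂ) ^ n *
            (qp (q : ℂ) ((q : ℂ) * (∏ j, a j)⁻¹ * d) *
              qp (q : ℂ) ((q : ℂ) * (∏ j, b j)⁻¹ * d⁻¹) /
              qp (q : ℂ) ((q : ℂ) * (∏ j, a j)⁻¹ * (∏ j, b j)⁻¹)) *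
            (∏ i, ∏ j, qp (q : ℂ) ((q : ℂ) * (a i)⁻¹ * (b j)⁻¹)) * (-1 : ℂ) ^ n *
          ((∏ i, ∏ j ∈ Finset.Ioi i, x j * th (q : ℂ) (x i / x j)) /
            ∏ i : Fin n, ∏ j : Fin (n + 1), th (q : ℂ) (b j * x i)) *
          ((∏ i, x i * th (q : ℂ) (d * (∏ k, x k)⁻¹ * (x i)⁻¹)) /
            ∏ j : Fin (n + 1), th (q : ℂ) (b j * d * (∏ k, x k)⁻¹)) :=
  gustafson_An_summation_general (by exact_mod_cast hq0.ne')
    (by simpa [abs_of_pos hq0] using hq1) hd (by simpa [abs_of_pos hq0] using hbal) hx hxb hdb
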